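/- Let (Q, Σ) be a DFA with n = |Q| such that some word w over Σ satisfies |w| ≤ 9 and |Qw| = n − 3. Suppose there exist four pairwise distinct states q₁, q₂, q₃, q₄ ∈ Q such that every letter s ∈ Σ satisfies one of the following: (I) Qs = Q and qᵢs = qᵢ for i = 1,2,3,4; (A) Qs = Q and q₁s = q₂, q₂s = q₃, q₃s = q₄, q₄s = q₁; (B) Qs = Q∖{q₁}, q₁s = q₂s, q₃s = q₃, q₄s = q₄. Then every word w = w₁w₂⋯w_k over Σ with k ≤ 9 and |Qw| = n − 3 satisfies k = 9, |Q(w₁⋯wᵢ)| = n − 1 for i = 1,2,3,4, and |Q(w₁⋯wᵢ)| = n − 2 for i = 5,6,7,8. -/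

import Mathlib

/-- The image of a finite set of states `R` under a word (list of letters),
where each letter `s` acts on states via `act s`. -/
def wordImage {Q A : Type*} [DecidableEq Q] (act : A → Q → Q) (R : Finset Q) :
    List A → Finset Q
  | [] => R
  | s :: w => wordImage act (R.image (act s)) w

/-!
A word lowers the size of its image exactly when a letter of type (B) is read while `q₁` and `q₂`
both lie in the image. Reading (B) makes `q₁` a hole of the image, so at least two letters (A) must
move this hole away before the next loss. If the second loss happens after exactly two, it leaves
the holes `{q₁, q₃}`, from which six more letters are needed. With a third letter (A), it leaves
`{q₁, q₄}`, from which `A A A B` is the fastest continuation, so the extremal pattern is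
`B AAA B AAA B`. Two potentials on the set of holes, a lower bound for the time needed to reach it
and one for the time still needed after it, turn this into a proof. Holes outside `q₁, …, q₄` arise
only when (B) is read while `q₁` and `q₂` are both holes; from then on it is enough to know the size
of the image and whether it avoids `q₁` or `q₂`.
-/

section MergingMap

variable {Q : Type*} {f : Q → Q} {a b : Q}

theorem injOn_compl_singleton_of_range_eq [Finite Q] (hrange : Set.range f = {a}ᶜ) (hab : a ≠ b)
    (hf : f a = f b) : Set.InjOn f {a}ᶜ := by
  have hmaps : Set.MapsTo f {a}ᶜ {a}ᶜ := fun x _ => hrange ▸ Set.mem_range_self x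
  have hsurj : Set.SurjOn f {a}ᶜ {a}ᶜ := by
    intro y hy
    obtain ⟨x, rfl⟩ : y ∈ Set.range f := hrange ▸ hy
    by_cases hx : x = a
    · exact ⟨b, hab.symm, by rw [hx, hf]⟩
    · exact ⟨x, hx, rfl⟩
  exact (((Set.toFinite _).surjOn_iff_bijOn_of_mapsTo hmaps).1 hsurj).injOn

theorem eq_or_merged_of_map_eq [Finite Q] (hrange : Set.range f = {a}ᶜ) (hab : a ≠ b)
    (hf : f a = f b) {x y : Q} (hxy : f x = f y) :
    x = y ∨ (x = a ∧ y = b) ∨ (x = b ∧ y = a) := by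
  have hinj : ∀ {x y}, x ≠ a → y ≠ a → f x = f y → x = y := fun hx hy h =>
    injOn_compl_singleton_of_range_eq hrange hab hf hx hy h
  by_cases hx : x = a <;> by_cases hy : y = a
  · exact .inl (hx.trans hy.symm)
  · exact .inr (.inl ⟨hx, hinj hy hab.symm (by rw [← hxy, hx, hf])⟩)
  · exact .inr (.inr ⟨hinj hx hab.symm (by rw [hxy, hy, hf]), hy⟩)
  · exact .inl (hinj hx hy hxy)

theorem card_image_of_merging [Finite Q] [DecidableEq Q] (hrange : Set.range f = {a}ᶜ)
    (hab : a ≠ b) (hf : f a = f b) {R : Finset Q} (hR : a ∉ R ∨ b ∉ R) :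
    (R.image f).card = R.card := by
  refine Finset.card_image_of_injOn fun x hx y hy hxy => ?_
  have := eq_or_merged_of_map_eq hrange hab hf hxy
  grind

theorem image_compl_of_merging [Fintype Q] [DecidableEq Q] (hrange : Set.range f = {a}ᶜ)
    (hab : a ≠ b) (hf : f a = f b) {S : Finset Q} (hS : ¬ (a ∈ S ∧ b ∈ S)) :
    Sᶜ.image f = (insert a ((S \ {a, b}).image f))ᶜ := by
  have hker : ∀ x y, f x = f y → x = y ∨ (x = a ∧ y = b) ∨ (x = b ∧ y = a) := fun _ _ =>
    eq_or_merged_of_map_eq hrange hab hf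
  have hmem : ∀ y, (∃ x, f x = y) ↔ y ≠ a := fun y => Set.ext_iff.1 hrange y
  ext y
  simp only [Finset.mem_image, Finset.mem_compl, Finset.mem_insert, Finset.mem_sdiff,
    Finset.mem_singleton, not_or, not_exists, not_and]
  constructor
  · rintro ⟨x, hx, rfl⟩
    refine ⟨(hmem _).1 ⟨x, rfl⟩, fun z hz hzx => ?_⟩
    have := hker z x hzx
    grind
  · rintro ⟨hy, hz⟩
    obtain ⟨x, rfl⟩ := (hmem y).2 hy
    grind

end MergingMap

section WordImage

variable {Q A : Type*} [DecidableEq Q] (act : A → Q → Q)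

theorem wordImage_append (R : Finset Q) (u v : List A) :
    wordImage act R (u ++ v) = wordImage act (wordImage act R u) v := by
  induction u generalizing R with
  | nil => rfl
  | cons s _ ih => exact ih (R.image (act s))

end WordImage

section Holes

/-- The time potential from the start: a lower bound, capped at `5`, for the length of a word whose
image misses exactly the states with indices in `T`. Here and below the index `i : Fin 4` stands for
the state `q_{i+1}` of the paper. -/
def arrivalTime (T : Finset (Fin 4)) : ℕ :=
  if T = ∅ then 0
  else if T = {0} then 1
  else if T = {1} then 2
  else if T = {2} then 3
  else if T = {3} ∨ T = {0, 2} then 4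
  else 5

/-- The time potential to the end: a lower bound for the number of letters still needed to make
the image lose three states when it misses exactly the states with indices in `T`. -/
def remainingTime (T : Finset (Fin 4)) : ℕ :=
  if T = ∅ then 9
  else if T = {0} then 8
  else if T = {1} then 7
  else if T = {2} ∨ T = {0, 2} then 6
  else if T = {3} ∨ T = {1, 3} then 5
  else if T = {0, 3} then 4
  else if T = {0, 1} then 3
  else if T = {1, 2} then 2
  else if T = {2, 3} then 1
  else 0

/-- The sets of holes that one letter of type (I), (A) or (B), in this order, makes out of the set
of holes `T`. For (B) this is only meaningful if `0` and `1` are not both in `T`. -/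
def nextHoles (T : Finset (Fin 4)) : Finset (Finset (Fin 4)) :=
  {T, T.image (· + 1), insert 0 (T \ {0, 1})}

theorem arrivalTime_le_of_mem_nextHoles :
    ∀ T, ∀ T' ∈ nextHoles T, arrivalTime T' ≤ arrivalTime T + 1 := by
  decide

theorem remainingTime_le_of_mem_nextHoles :
    ∀ T, ∀ T' ∈ nextHoles T, remainingTime T ≤ remainingTime T' + 1 := by
  decide

theorem arrivalTime_eq_five_of_subset : ∀ T, {0, 1} ⊆ T → arrivalTime T = 5 := by
  decide

theorem remainingTime_le_three_of_subset : ∀ T, {0, 1} ⊆ T → remainingTime T ≤ 3 := by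
  decide

theorem remainingTime_eq_zero_of_three_le_card : ∀ T, 3 ≤ T.card → remainingTime T = 0 := by
  decide

theorem card_eq_one_of_arrivalTime_add_remainingTime_le : ∀ T, arrivalTime T ≤ 4 →
    remainingTime T ≤ 8 → arrivalTime T + remainingTime T ≤ 9 → T.card = 1 := by
  decide

theorem two_le_card_of_remainingTime_le_four : ∀ T, remainingTime T ≤ 4 → 2 ≤ T.card := by
  decide

end Holes

section Letters

variable {Q : Type*} {q : Fin 4 ↪ Q}

/-- The three types (I), (A) and (B) of letters allowed in the theorem, in this order, for the
quadruple of states `q 0, q 1, q 2, q 3`. -/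
inductive IsLetter (q : Fin 4 ↪ Q) (f : Q → Q) : Prop
  | fixing (bijective : Function.Bijective f) (map_eq : ∀ i, f (q i) = q i)
  | rotating (bijective : Function.Bijective f) (map_eq : ∀ i, f (q i) = q (i + 1))
  | merging (range_eq : Set.range f = {q 0}ᶜ) (map_zero : f (q 0) = f (q 1))
      (map_two : f (q 2) = q 2) (map_three : f (q 3) = q 3)

variable [Fintype Q] [DecidableEq Q]

theorem bijective_of_image_univ_eq_univ {f : Q → Q} (hf : Finset.univ.image f = Finset.univ) :
    Function.Bijective f :=
  Finite.surjective_iff_bijective.1 <| Set.range_eq_univ.1 <| by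
    rw [← Fintype.coe_image_univ, hf, Finset.coe_univ]

theorem range_eq_compl_of_image_univ_eq_sdiff {f : Q → Q} {S : Finset Q}
    (hf : Finset.univ.image f = Finset.univ \ S) : Set.range f = (↑S)ᶜ := by
  rw [← Fintype.coe_image_univ, hf, ← Finset.compl_eq_univ_sdiff, Finset.coe_compl]

theorem image_compl_map_of_bijective {f : Q → Q} (hf : Function.Bijective f) {g : Fin 4 → Fin 4}
    (hg : ∀ i, f (q i) = q (g i)) (T : Finset (Fin 4)) :
    (T.map q)ᶜ.image f = ((T.image g).map q)ᶜ := by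
  rw [Finset.map_eq_image, Finset.map_eq_image, Finset.image_image, Finset.compl_eq_univ_sdiff,
    Finset.image_sdiff _ _ hf.injective, Finset.image_univ_of_surjective hf.surjective,
    Finset.image_image, ← Finset.compl_eq_univ_sdiff]
  exact congrArg _ (Finset.image_congr fun i _ => hg i)

theorem IsLetter.exists_image_compl_map_eq {f : Q → Q} (hf : IsLetter q f) {T : Finset (Fin 4)}
    (hT : ¬ {0, 1} ⊆ T) : ∃ T' ∈ nextHoles T, (T.map q)ᶜ.image f = (T'.map q)ᶜ := by
  cases hf with
  | fixing bijective map_eq =>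
    refine ⟨T, by simp [nextHoles], ?_⟩
    simpa using image_compl_map_of_bijective (g := id) bijective map_eq T
  | rotating bijective map_eq =>
    exact ⟨T.image (· + 1), by simp [nextHoles], image_compl_map_of_bijective bijective map_eq T⟩
  | merging range_eq map_zero map_two map_three =>
    have hfixed : ∀ i ∈ T \ {0, 1}, f (q i) = q i := by
      intro i hi
      fin_cases i <;> simp_all
    refine ⟨insert 0 (T \ {0, 1}), by simp [nextHoles], ?_⟩
    rw [image_compl_of_merging range_eq (q.injective.ne zero_ne_one) map_zero
      (by simpa [Finset.insert_subset_iff] using hT), Finset.map_insert]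
    have hsdiff : T.map q \ {q 0, q 1} = (T \ {0, 1}).map q := by
      simp [Finset.map_sdiff]
    rw [hsdiff, Finset.map_eq_image, Finset.image_image]
    exact congrArg (fun S => (insert (q 0) S)ᶜ) (Finset.image_congr hfixed)

end Letters

section Automaton

variable {Q A : Type*} [Fintype Q] [DecidableEq Q] {q : Fin 4 ↪ Q} {act : A → Q → Q}

theorem length_lower_bounds_of_card_le_card_add_two (hact : ∀ s, IsLetter q (act s)) {w : List A}
    {R : Finset Q} (hR : Fintype.card Q ≤ R.card + 2)
    (hw : (wordImage act R w).card + 3 ≤ Fintype.card Q) :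
    1 ≤ w.length ∧ (q 1 ∉ R → 2 ≤ w.length) ∧ (q 0 ∉ R → 3 ≤ w.length) := by
  induction w generalizing R with
  | nil =>
    rw [wordImage] at hw
    omega
  | cons s w ih =>
    rw [wordImage] at hw
    have ih := @ih (R.image (act s))
    rw [List.length_cons]
    cases hact s with
    | fixing bijective map_eq =>
      have hmem : ∀ i, q i ∈ R.image (act s) ↔ q i ∈ R := fun i => by
        simpa [map_eq] using bijective.injective.mem_finset_image (s := R) (a := q i)
      have := ih (by rwa [Finset.card_image_of_injective _ bijective.injective]) hw
      grind
    | rotating bijective map_eq =>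
      have hmem : ∀ i, q (i + 1) ∈ R.image (act s) ↔ q i ∈ R := fun i => by
        rw [← map_eq, bijective.injective.mem_finset_image]
      have := ih (by rwa [Finset.card_image_of_injective _ bijective.injective]) hw
      grind
    | merging range_eq map_zero =>
      have hzero : q 0 ∉ R.image (act s) := fun h => by
        obtain ⟨x, -, hx⟩ := Finset.mem_image.1 h
        exact (range_eq ▸ Set.mem_range_self x : act s x ∈ ({q 0}ᶜ : Set Q)) hx
      have hcard := card_image_of_merging range_eq (q.injective.ne zero_ne_one) map_zero (R := R)
      by_cases hR' : q 0 ∉ R ∨ q 1 ∉ R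
      · have := (ih (by rwa [hcard hR']) hw).2.2 hzero
        omega
      · grind

theorem remainingTime_le_length (hact : ∀ s, IsLetter q (act s)) {w : List A}
    {T : Finset (Fin 4)} (hw : (wordImage act (T.map q)ᶜ w).card + 3 ≤ Fintype.card Q) :
    remainingTime T ≤ w.length := by
  induction w generalizing T with
  | nil =>
    have hT : 3 ≤ T.card := by
      have := Finset.card_add_card_compl (T.map q)
      rw [Finset.card_map] at this
      rw [wordImage] at hw
      omega
    exact (remainingTime_eq_zero_of_three_le_card T hT).le
  | cons s w ih =>
    by_cases hT : {0, 1} ⊆ T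
    · rcases le_or_gt 3 T.card with hcard | hcard
      · simp [remainingTime_eq_zero_of_three_le_card T hcard]
      · have hcompl : Fintype.card Q ≤ (T.map q)ᶜ.card + 2 := by
          rw [Finset.card_compl, Finset.card_map]
          omega
        have hzero : q 0 ∉ (T.map q)ᶜ := by
          simpa using hT (Finset.mem_insert_self 0 {1})
        exact (remainingTime_le_three_of_subset T hT).trans
          ((length_lower_bounds_of_card_le_card_add_two hact hcompl hw).2.2 hzero)
    · obtain ⟨T', hT', himage⟩ := (hact s).exists_image_compl_map_eq hT
      rw [wordImage, himage] at hw
      exact (remainingTime_le_of_mem_nextHoles T T' hT').trans (Nat.succ_le_succ (ih hw))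

theorem nine_le_length (hact : ∀ s, IsLetter q (act s)) {w : List A}
    (hw : (wordImage act Finset.univ w).card + 3 ≤ Fintype.card Q) : 9 ≤ w.length :=
  remainingTime_le_length (T := ∅) hact (by simpa using hw)

theorem exists_arrivalTime_le_or_card_le (hact : ∀ s, IsLetter q (act s)) (w : List A) :
    (∃ T : Finset (Fin 4), wordImage act Finset.univ w = (T.map q)ᶜ ∧ arrivalTime T ≤ w.length) ∨
      (5 ≤ w.length ∧ (wordImage act Finset.univ w).card + 2 ≤ Fintype.card Q) := by
  induction w using List.reverseRecOn with
  | nil => exact .inl ⟨∅, by simp [wordImage], by simp [arrivalTime]⟩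
  | append_singleton w s ih =>
    have hle := Finset.card_image_le (s := wordImage act Finset.univ w) (f := act s)
    rw [wordImage_append, wordImage, wordImage, List.length_append, List.length_singleton]
    rcases ih with ⟨T, himage, htime⟩ | ⟨hlength, hcard⟩
    · by_cases hT : {0, 1} ⊆ T
      · have hcard : 2 ≤ T.card := Finset.card_le_card hT
        have hcompl := Finset.card_add_card_compl (T.map q)
        rw [Finset.card_map, ← himage] at hcompl
        rw [arrivalTime_eq_five_of_subset T hT] at htime
        exact .inr ⟨by omega, by omega⟩
      · obtain ⟨T', hT', hstep⟩ := (hact s).exists_image_compl_map_eq hT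
        have := arrivalTime_le_of_mem_nextHoles T T' hT'
        exact .inl ⟨T', by rw [himage, hstep], by omega⟩
    · exact .inr ⟨by omega, by omega⟩

theorem card_wordImage_take_of_le_four (hact : ∀ s, IsLetter q (act s)) {w : List A}
    (hlength : w.length = 9) (hw : (wordImage act Finset.univ w).card + 3 ≤ Fintype.card Q)
    {i : ℕ} (hi : 1 ≤ i) (hi' : i ≤ 4) :
    (wordImage act Finset.univ (w.take i)).card + 1 = Fintype.card Q := by
  have htake : (w.take i).length = i := List.length_take_of_le (by omega)
  have hdrop : (w.drop i).length = 9 - i := by rw [List.length_drop, hlength]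
  rw [← List.take_append_drop i w, wordImage_append] at hw
  rcases exists_arrivalTime_le_or_card_le hact (w.take i) with ⟨T, himage, harrival⟩ | ⟨hlong, -⟩
  · rw [himage] at hw ⊢
    have hremaining := remainingTime_le_length hact hw
    have hT : T.card = 1 := card_eq_one_of_arrivalTime_add_remainingTime_le T
      (by omega) (by omega) (by omega)
    have := Finset.card_compl_add_card (T.map q)
    rwa [Finset.card_map, hT] at this
  · omega

theorem card_wordImage_take_of_five_le (hact : ∀ s, IsLetter q (act s)) {w : List A}
    (hlength : w.length = 9) (hw : (wordImage act Finset.univ w).card + 3 ≤ Fintype.card Q)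
    {i : ℕ} (hi : 5 ≤ i) (hi' : i ≤ 8) :
    (wordImage act Finset.univ (w.take i)).card + 2 = Fintype.card Q := by
  have htake : (w.take i).length = i := List.length_take_of_le (by omega)
  have hdrop : (w.drop i).length = 9 - i := by rw [List.length_drop, hlength]
  rw [← List.take_append_drop i w, wordImage_append] at hw
  have hlower : Fintype.card Q < (wordImage act Finset.univ (w.take i)).card + 3 := by
    by_contra! h
    have := nine_le_length hact h
    omega
  have hupper : (wordImage act Finset.univ (w.take i)).card + 2 ≤ Fintype.card Q := by
    rcases exists_arrivalTime_le_or_card_le hact (w.take i) with ⟨T, himage, -⟩ | ⟨-, hle⟩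
    · rw [himage] at hw ⊢
      have hremaining := remainingTime_le_length hact hw
      have hT : 2 ≤ T.card := two_le_card_of_remainingTime_le_four T (by omega)
      have := Finset.card_compl_add_card (T.map q)
      rw [Finset.card_map] at this
      omega
    · exact hle
  omega

end Automaton

theorem stmt_12 {Q A : Type*} [Fintype Q] [DecidableEq Q] (act : A → Q → Q)
    (h : ∃ w : List A, w.length ≤ 9 ∧
      (wordImage act Finset.univ w).card = Fintype.card Q - 3)
    (q₁ q₂ q₃ q₄ : Q)
    (hq : q₁ ≠ q₂ ∧ q₁ ≠ q₃ ∧ q₁ ≠ q₄ ∧ q₂ ≠ q₃ ∧ q₂ ≠ q₄ ∧ q₃ ≠ q₄)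
    (hs : ∀ s : A,
      (Finset.univ.image (act s) = Finset.univ ∧
        act s q₁ = q₁ ∧ act s q₂ = q₂ ∧ act s q₃ = q₃ ∧ act s q₄ = q₄) ∨
      (Finset.univ.image (act s) = Finset.univ ∧
        act s q₁ = q₂ ∧ act s q₂ = q₃ ∧ act s q₃ = q₄ ∧ act s q₄ = q₁) ∨
      (Finset.univ.image (act s) = Finset.univ \ {q₁} ∧
        act s q₁ = act s q₂ ∧ act s q₃ = q₃ ∧ act s q₄ = q₄)) :
    ∀ w : List A, w.length ≤ 9 →
      (wordImage act Finset.univ w).card = Fintype.card Q - 3 →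
      w.length = 9 ∧
      (∀ i : ℕ, 1 ≤ i → i ≤ 4 →
        (wordImage act Finset.univ (w.take i)).card = Fintype.card Q - 1) ∧
      (∀ i : ℕ, 5 ≤ i → i ≤ 8 →
        (wordImage act Finset.univ (w.take i)).card = Fintype.card Q - 2) := by
  intro w hw hcard
  obtain ⟨h12, h13, h14, h23, h24, h34⟩ := hq
  let q : Fin 4 ↪ Q := ⟨![q₁, q₂, q₃, q₄], by
    intro i j; fin_cases i <;> fin_cases j <;> simp [*, Ne.symm]⟩
  have hact : ∀ s, IsLetter q (act s) := by
    intro s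
    rcases hs s with ⟨himage, h₁, h₂, h₃, h₄⟩ | ⟨himage, h₁, h₂, h₃, h₄⟩ | ⟨himage, h₁₂, h₃, h₄⟩
    · exact .fixing (bijective_of_image_univ_eq_univ himage)
        (by intro i; fin_cases i <;> assumption)
    · exact .rotating (bijective_of_image_univ_eq_univ himage)
        (by intro i; fin_cases i <;> assumption)
    · have hrange := range_eq_compl_of_image_univ_eq_sdiff himage
      rw [Finset.coe_singleton] at hrange
      exact .merging hrange h₁₂ h₃ h₄
  have hfour : 4 ≤ Fintype.card Q := by simpa using Fintype.card_le_of_embedding q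
  have hloss : (wordImage act Finset.univ w).card + 3 ≤ Fintype.card Q := by omega
  have hlength : w.length = 9 := hw.antisymm (nine_le_length hact hloss)
  exact ⟨hlength,
    fun _ hi hi' => Nat.eq_sub_of_add_eq (card_wordImage_take_of_le_four hact hlength hloss hi hi'),
    fun _ hi hi' => Nat.eq_sub_of_add_eq (card_wordImage_take_of_five_le hact hlength hloss hi hi')⟩
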